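/- Practical bound with informed (Gibbs) prior: Let ω : H → ℝ be measurable with ∫_H e^{−ω} dλ ∈ (0,∞) and let P be the Gibbs prior with density proportional to e^{−ω(h)}. For any probability measure D on Z, any loss ℓ : H × Z → [0,1], any measurable parametric function μ : H × Z^m → ℝ with finite positive Gibbs normalizer, and any δ ∈ (0,1], with probability at least 1−δ over S ∼ D^m, h′ ∼ P, and h ∼ Q_S (Gibbs posterior for μ), one has kl(R_S^ℓ(h) ‖ R_D^ℓ(h)) ≤ (1/m)·[ (μ(h′,S) − ω(h′)) − (μ(h,S) − ω(h)) + ln(8√m/δ²) ]. -/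

import Mathlib

open MeasureTheory ProbabilityTheory

/-- The true risk `R_D^ℓ(h) = E_{z∼D} ℓ(h,z)`. -/
noncomputable def trueRisk {H Z : Type*} [MeasurableSpace Z]
    (D : Measure Z) (ℓ : H → Z → ℝ) (h : H) : ℝ :=
  ∫ z, ℓ h z ∂D

/-- The empirical risk `R_S^ℓ(h) = (1/m) Σ_{i=1}^m ℓ(h,z_i)`. -/
noncomputable def empRisk {H Z : Type*} {m : ℕ}
    (ℓ : H → Z → ℝ) (h : H) (S : Fin m → Z) : ℝ :=
  (∑ i, ℓ h (S i)) / m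

/-- The binary KL divergence `kl(q‖p) = q ln(q/p) + (1−q) ln((1−q)/(1−p))`. -/
noncomputable def binKL (q p : ℝ) : ℝ :=
  q * Real.log (q / p) + (1 - q) * Real.log ((1 - q) / (1 - p))

/-!
Write `u = ω - μ(·, S)`. The posterior is the exponential tilt of the prior, `dQ_S ∝ e^u dP`, so its
normaliser `∫ e^u dP` is the mean of `e^{u(h')}` over an independent draw `h' ∼ P`. Hence for every
`φ ≥ 0` the mean of `e^{u(h') - u(h)} φ(h, S)` over `h' ∼ P`, `h ∼ Q_S` is the mean of `φ(h, S)`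
over `h ∼ P`. For `φ = e^{m kl(R_S(h) ‖ R_D(h))}` the hypothesis no longer depends on the sample, so
it remains to show `E_S φ(h, S) ≤ 8√m` for fixed `h` and to apply Markov's inequality.

For that moment bound, choose `⌈3√m⌉ ≤ 4√m` points `r`, equally spaced in the angle `arcsin √r`, so
that every `q ∈ [0, 1]` satisfies `m kl(q ‖ r) ≤ ln 2` for one of them. For `q = R_S` and this `r`,
`e^{m kl(R_S ‖ p)}` is at most twice the likelihood ratio of the sample between the success
probabilities `r` and `p`. Each likelihood ratio has mean `1`, so summing over all `r` bounds the
moment by `2 · 4√m`.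
-/

open Real Set

section BinaryKL

variable {p q r : ℝ}

lemma mul_log_div_le {x y : ℝ} (hx : 0 ≤ x) (hy : 0 < y) : x * log (x / y) ≤ x * (x / y - 1) := by
  rcases hx.eq_or_lt with rfl | hx
  · simp
  · exact mul_le_mul_of_nonneg_left (log_le_sub_one_of_pos (div_pos hx hy)) hx.le

lemma binKL_le_sq_div (hq : q ∈ Icc 0 1) (hr : r ∈ Ioo 0 1) :
    binKL q r ≤ (q - r) ^ 2 / (r * (1 - r)) := by
  have hr₀ : r ≠ 0 := hr.1.ne'
  have hr₁ : 1 - r ≠ 0 := (sub_pos.2 hr.2).ne'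
  calc binKL q r ≤ q * (q / r - 1) + (1 - q) * ((1 - q) / (1 - r) - 1) :=
        add_le_add (mul_log_div_le hq.1 hr.1)
          (mul_log_div_le (sub_nonneg.2 hq.2) (sub_pos.2 hr.2))
    _ = (q - r) ^ 2 / (r * (1 - r)) := by field_simp; ring

lemma mul_log_div_add_mul_log_div (x : ℝ) {y z : ℝ} (hy : y ≠ 0) (hz : z ≠ 0) :
    x * log (x / y) + x * log (y / z) = x * log (x / z) := by
  rcases eq_or_ne x 0 with rfl | hx
  · simp
  · rw [log_div hx hy, log_div hy hz, log_div hx hz]; ring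

lemma binKL_eq_add (q : ℝ) (hp : p ∈ Ioo 0 1) (hr : r ∈ Ioo 0 1) :
    binKL q p = binKL q r + (q * log (r / p) + (1 - q) * log ((1 - r) / (1 - p))) := by
  have h₁ := mul_log_div_add_mul_log_div q hr.1.ne' hp.1.ne'
  have h₂ := mul_log_div_add_mul_log_div (1 - q) (sub_pos.2 hr.2).ne' (sub_pos.2 hp.2).ne'
  unfold binKL
  linarith

lemma binKL_self (p : ℝ) : binKL p p = 0 := by
  simp [binKL]

lemma measurable_binKL : Measurable fun x : ℝ × ℝ ↦ binKL x.1 x.2 := by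
  unfold binKL
  fun_prop

end BinaryKL

section Cover

lemma sin_le_mul_sin {c x y : ℝ} (hx : 0 ≤ x) (hxy : x ≤ y) (hyc : y ≤ c * x) (hy : y ≤ π) :
    sin y ≤ c * sin x := by
  rcases hx.eq_or_lt with rfl | hx
  · obtain rfl : y = 0 := le_antisymm (by simpa using hyc) hxy
    simp
  have hy₀ : 0 < y := hx.trans_le hxy
  have hsin : (x / y) * sin y ≤ sin x := by
    have h := strictConcaveOn_sin_Icc.concaveOn.2 ⟨hy₀.le, hy⟩ ⟨le_rfl, pi_pos.le⟩
      (div_nonneg hx.le hy₀.le) (sub_nonneg.2 (div_le_one_of_le₀ hxy hy₀.le)) (add_sub_cancel _ _)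
    simpa [hy₀.ne'] using h
  calc sin y = y / x * (x / y * sin y) := by field_simp
    _ ≤ y / x * sin x := by gcongr
    _ ≤ c * sin x :=
        mul_le_mul_of_nonneg_right ((div_le_iff₀ hx).2 hyc)
          (sin_nonneg_of_nonneg_of_le_pi hx.le (hxy.trans hy))

lemma sin_sq_sub_sin_sq (a b : ℝ) : sin a ^ 2 - sin b ^ 2 = sin (a - b) * sin (a + b) := by
  rw [sin_sub, sin_add]
  linear_combination sin b ^ 2 * sin_sq_add_cos_sq a - sin a ^ 2 * sin_sq_add_cos_sq b

variable {a b : ℝ}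

lemma sin_add_le_mul_sin_two_mul (ha : a ∈ Icc 0 (π / 2)) (hab : a ≤ 2 * b)
    (hab' : π / 2 - a ≤ 2 * (π / 2 - b)) : sin (a + b) ≤ 3 / 2 * sin (2 * b) := by
  obtain ⟨ha₀, ha₁⟩ := ha
  rcases le_total b a with h | h
  · exact sin_le_mul_sin (by linarith) (by linarith) (by linarith) (by linarith)
  · rw [← sin_pi_sub (a + b), ← sin_pi_sub (2 * b)]
    exact sin_le_mul_sin (by linarith) (by linarith) (by linarith) (by linarith)

lemma sin_sq_mem_Ioo (hb : b ∈ Ioo 0 (π / 2)) : sin b ^ 2 ∈ Ioo 0 1 := by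
  have hsin : 0 < sin b := sin_pos_of_pos_of_lt_pi hb.1 (by linarith [hb.2, pi_pos])
  have hcos : 0 < cos b := cos_pos_of_mem_Ioo ⟨by linarith [hb.1, pi_pos], hb.2⟩
  exact ⟨by positivity, by nlinarith [sin_sq_add_cos_sq b]⟩

lemma binKL_sin_sq_le (ha : a ∈ Icc 0 (π / 2)) (hb : b ∈ Ioo 0 (π / 2))
    (hab : a ≤ 2 * b) (hab' : π / 2 - a ≤ 2 * (π / 2 - b)) :
    binKL (sin a ^ 2) (sin b ^ 2) ≤ 9 * (a - b) ^ 2 := by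
  have hr := sin_sq_mem_Ioo hb
  have hsin_add : sin (a + b) ^ 2 ≤ (3 * (sin b * cos b)) ^ 2 := by
    have h := sin_add_le_mul_sin_two_mul ha hab hab'
    rw [sin_two_mul] at h
    exact pow_le_pow_left₀ (sin_nonneg_of_nonneg_of_le_pi (add_nonneg ha.1 hb.1.le)
      (by linarith [ha.2, hb.2])) (by linarith) 2
  have hsin_sub : sin (a - b) ^ 2 ≤ (a - b) ^ 2 := sq_le_sq.2 abs_sin_le_abs
  refine (binKL_le_sq_div ⟨sq_nonneg _, sin_sq_le_one a⟩ hr).trans ?_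
  rw [div_le_iff₀ (mul_pos hr.1 (sub_pos.2 hr.2)), sin_sq_sub_sin_sq, mul_pow, ← cos_sq']
  calc sin (a - b) ^ 2 * sin (a + b) ^ 2 ≤ (a - b) ^ 2 * (3 * (sin b * cos b)) ^ 2 := by gcongr
    _ = 9 * (a - b) ^ 2 * (sin b ^ 2 * cos b ^ 2) := by ring

lemma exists_abs_sub_odd_mul_le {N : ℕ} (hN : 0 < N) {d x : ℝ} (hd : 0 < d)
    (hx : x ∈ Icc 0 (2 * N * d)) : ∃ j < N, |x - (2 * j + 1) * d| ≤ d := by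
  have h2d : 0 < 2 * d := by positivity
  rcases hx.2.eq_or_lt with rfl | hxN
  · refine ⟨N - 1, by lia, ?_⟩
    rw [Nat.cast_pred hN, abs_le]
    constructor <;> linarith
  · have hfloor : ⌊x / (2 * d)⌋₊ < N :=
      (Nat.floor_lt (div_nonneg hx.1 h2d.le)).2 ((div_lt_iff₀ h2d).2 (by linarith))
    have hle := (le_div_iff₀ h2d).1 (Nat.floor_le (div_nonneg hx.1 h2d.le))
    have hlt := (div_lt_iff₀ h2d).1 (Nat.lt_floor_add_one (x / (2 * d)))
    refine ⟨_, hfloor, abs_le.2 ⟨?_, ?_⟩⟩ <;> linarith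

/-- A finite `ε`-net of `[0, 1]` for the binary KL divergence. The net points are the second
argument of `binKL` and lie inside `(0, 1)`, where it has no junk values. -/
structure IsBinKLCover (R : Finset ℝ) (ε : ℝ) : Prop where
  mem_Ioo : ∀ r ∈ R, r ∈ Ioo 0 1
  exists_binKL_le : ∀ q ∈ Icc 0 1, ∃ r ∈ R, binKL q r ≤ ε

lemma exists_isBinKLCover {N : ℕ} (hN : 0 < N) :
    ∃ R : Finset ℝ, R.card ≤ N ∧ IsBinKLCover R (9 * (π / (4 * N)) ^ 2) := by
  have hN' : (0 : ℝ) < N := Nat.cast_pos.2 hN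
  set d := π / (4 * N) with hd
  have hd₀ : 0 < d := by positivity
  have hdN : π / 2 = 2 * N * d := by rw [hd]; field_simp; ring
  have hangle {j : ℕ} (hj : j < N) : d ≤ (2 * j + 1) * d ∧ d ≤ π / 2 - (2 * j + 1) * d := by
    have hj' : (j : ℝ) + 1 ≤ N := mod_cast hj
    rw [hdN]
    constructor <;> nlinarith [(Nat.cast_nonneg j : (0 : ℝ) ≤ j)]
  refine ⟨(Finset.range N).image fun j : ℕ ↦ sin ((2 * j + 1) * d) ^ 2,
    Finset.card_image_le.trans_eq (Finset.card_range N), ?_, fun q hq ↦ ?_⟩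
  · simp only [Finset.forall_mem_image, Finset.mem_range]
    intro j hj
    obtain ⟨h₁, h₂⟩ := hangle hj
    exact sin_sq_mem_Ioo ⟨by linarith, by linarith⟩
  · have ha : arcsin √q ∈ Icc 0 (π / 2) := ⟨arcsin_nonneg.2 (sqrt_nonneg q), arcsin_le_pi_div_two _⟩
    have hsin : sin (arcsin √q) ^ 2 = q := by
      rw [sin_arcsin (by linarith [sqrt_nonneg q]) (sqrt_le_one.2 hq.2), sq_sqrt hq.1]
    obtain ⟨j, hj, hdist⟩ := exists_abs_sub_odd_mul_le hN hd₀ (hdN ▸ ha)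
    obtain ⟨h₁, h₂⟩ := hangle hj
    obtain ⟨hlo, hhi⟩ := abs_le.1 hdist
    refine ⟨_, Finset.mem_image_of_mem _ (Finset.mem_range.2 hj), ?_⟩
    calc binKL q (sin ((2 * j + 1) * d) ^ 2)
        = binKL (sin (arcsin √q) ^ 2) (sin ((2 * j + 1) * d) ^ 2) := by rw [hsin]
      _ ≤ 9 * (arcsin √q - (2 * j + 1) * d) ^ 2 :=
          binKL_sin_sq_le ha ⟨by linarith, by linarith⟩ (by linarith) (by linarith)
      _ ≤ 9 * d ^ 2 := by gcongr 9 * ?_; exact sq_le_sq' hlo hhi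

end Cover

section LikelihoodRatio

/-- The likelihood ratio of an outcome `x` between the Bernoulli laws of parameters `r` and `p`,
extended affinely from `x ∈ {0, 1}` to `x ∈ [0, 1]`. -/
noncomputable def bernoulliLR (p r x : ℝ) : ℝ :=
  x * (r / p) + (1 - x) * ((1 - r) / (1 - p))

variable {p r : ℝ}

lemma exp_log_div_le_bernoulliLR (hp : p ∈ Ioo 0 1) (hr : r ∈ Ioo 0 1) {x : ℝ} (hx : x ∈ Icc 0 1) :
    exp (x * log (r / p) + (1 - x) * log ((1 - r) / (1 - p))) ≤ bernoulliLR p r x := by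
  have h := convexOn_exp.2 (mem_univ (log (r / p))) (mem_univ (log ((1 - r) / (1 - p)))) hx.1
    (sub_nonneg.2 hx.2) (add_sub_cancel x 1)
  simpa only [bernoulliLR, smul_eq_mul, exp_log (div_pos hr.1 hp.1),
    exp_log (div_pos (sub_pos.2 hr.2) (sub_pos.2 hp.2))] using h

lemma bernoulliLR_nonneg (hp : p ∈ Ioo 0 1) (hr : r ∈ Ioo 0 1) {x : ℝ} (hx : x ∈ Icc 0 1) :
    0 ≤ bernoulliLR p r x :=
  (exp_pos _).le.trans (exp_log_div_le_bernoulliLR hp hr hx)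

lemma sum_div_mem_Icc {m : ℕ} {x : Fin m → ℝ} (hx : ∀ i, x i ∈ Icc 0 1) :
    (∑ i, x i) / m ∈ Icc 0 1 := by
  refine ⟨div_nonneg (Finset.sum_nonneg fun i _ ↦ (hx i).1) m.cast_nonneg,
    div_le_one_of_le₀ ?_ m.cast_nonneg⟩
  calc ∑ i, x i ≤ ∑ _i : Fin m, (1 : ℝ) := Finset.sum_le_sum fun i _ ↦ (hx i).2
    _ = m := by simp

lemma exp_mul_binKL_le_mul_prod_bernoulliLR (hp : p ∈ Ioo 0 1) (hr : r ∈ Ioo 0 1) {m : ℕ}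
    {x : Fin m → ℝ} (hx : ∀ i, x i ∈ Icc 0 1) :
    exp (m * binKL ((∑ i, x i) / m) p) ≤
      exp (m * binKL ((∑ i, x i) / m) r) * ∏ i, bernoulliLR p r (x i) := by
  set q := (∑ i, x i) / m with hq
  have hmq : m * q = ∑ i, x i := by
    rcases eq_or_ne m 0 with rfl | hm
    · simp
    · rw [hq]; field_simp
  have hsum : m * (q * log (r / p) + (1 - q) * log ((1 - r) / (1 - p))) =
      ∑ i, (x i * log (r / p) + (1 - x i) * log ((1 - r) / (1 - p))) := by
    rw [Finset.sum_add_distrib, ← Finset.sum_mul, ← Finset.sum_mul, Finset.sum_sub_distrib, ← hmq,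
      Finset.sum_const, Finset.card_univ, Fintype.card_fin, nsmul_one]
    ring
  rw [binKL_eq_add q hp hr, mul_add, exp_add, hsum, exp_sum]
  gcongr with i
  exact exp_log_div_le_bernoulliLR hp hr (hx i)

lemma IsBinKLCover.exp_mul_binKL_le_sum {R : Finset ℝ} {ε : ℝ} (hR : IsBinKLCover R ε)
    (hp : p ∈ Ioo 0 1) {m : ℕ} {x : Fin m → ℝ} (hx : ∀ i, x i ∈ Icc 0 1) :
    exp (m * binKL ((∑ i, x i) / m) p) ≤
      ∑ r ∈ R, exp (m * ε) * ∏ i, bernoulliLR p r (x i) := by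
  have hprod : ∀ r ∈ R, 0 ≤ ∏ i, bernoulliLR p r (x i) := fun r hr ↦
    Finset.prod_nonneg fun i _ ↦ bernoulliLR_nonneg hp (hR.mem_Ioo r hr) (hx i)
  obtain ⟨r, hr, hrε⟩ := hR.exists_binKL_le _ (sum_div_mem_Icc hx)
  calc exp (m * binKL ((∑ i, x i) / m) p)
      ≤ exp (m * binKL ((∑ i, x i) / m) r) * ∏ i, bernoulliLR p r (x i) :=
        exp_mul_binKL_le_mul_prod_bernoulliLR hp (hR.mem_Ioo r hr) hx
    _ ≤ exp (m * ε) * ∏ i, bernoulliLR p r (x i) := by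
        gcongr
        exact hprod r hr
    _ ≤ ∑ r ∈ R, exp (m * ε) * ∏ i, bernoulliLR p r (x i) :=
        Finset.single_le_sum (f := fun r ↦ exp (m * ε) * ∏ i, bernoulliLR p r (x i))
          (fun r hr ↦ mul_nonneg (exp_pos _).le (hprod r hr)) hr

variable {Z : Type*} [MeasurableSpace Z] {D : Measure Z} [IsProbabilityMeasure D] {f : Z → ℝ}

lemma integrable_bernoulliLR (p r : ℝ) (hf : Integrable f D) :
    Integrable (fun z ↦ bernoulliLR p r (f z)) D :=
  (hf.mul_const _).add (((integrable_const 1).sub hf).mul_const _)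

lemma integral_bernoulliLR (r : ℝ) (hf : Integrable f D) (hp : ∫ z, f z ∂D ∈ Ioo 0 1) :
    ∫ z, bernoulliLR (∫ z, f z ∂D) r (f z) ∂D = 1 := by
  have hf' : Integrable (fun z ↦ 1 - f z) D := (integrable_const 1).sub hf
  unfold bernoulliLR
  rw [integral_add (hf.mul_const _) (hf'.mul_const _), integral_mul_const, integral_mul_const,
    integral_sub (integrable_const 1) hf, integral_const, probReal_univ, one_smul,
    mul_div_cancel₀ _ hp.1.ne', mul_div_cancel₀ _ (sub_pos.2 hp.2).ne', add_sub_cancel]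

lemma integral_prod_bernoulliLR (r : ℝ) (hf : Integrable f D) (hp : ∫ z, f z ∂D ∈ Ioo 0 1) (m : ℕ) :
    ∫ S : Fin m → Z, ∏ i, bernoulliLR (∫ z, f z ∂D) r (f (S i)) ∂(Measure.pi fun _ ↦ D) = 1 := by
  rw [integral_fintype_prod_eq_pow fun z ↦ bernoulliLR (∫ z, f z ∂D) r (f z),
    integral_bernoulliLR r hf hp, one_pow]

end LikelihoodRatio

section MomentBound

variable {H Z : Type*} {m : ℕ} {ℓ : H → Z → ℝ} {h : H}

variable [MeasurableSpace Z] {D : Measure Z} [IsProbabilityMeasure D]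

lemma trueRisk_mem_Icc (hint : Integrable (ℓ h) D) (hℓ : ∀ z, ℓ h z ∈ Icc 0 1) :
    trueRisk D ℓ h ∈ Icc 0 1 :=
  (convex_Icc 0 1).integral_mem isClosed_Icc (ae_of_all _ hℓ) hint

lemma ae_eq_trueRisk_of_notMem_Ioo (hint : Integrable (ℓ h) D) (hℓ : ∀ z, ℓ h z ∈ Icc 0 1)
    (hrisk : trueRisk D ℓ h ∉ Ioo 0 1) : ∀ᵐ z ∂D, ℓ h z = trueRisk D ℓ h := by
  have hmem := trueRisk_mem_Icc hint hℓ
  rcases hmem.1.eq_or_lt with h₀ | h₀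
  · rw [← h₀]
    exact (integral_eq_zero_iff_of_nonneg (fun z ↦ (hℓ z).1) hint).1 h₀.symm
  · have h₁ : trueRisk D ℓ h = 1 := hmem.2.eq_of_not_lt fun hlt ↦ hrisk ⟨h₀, hlt⟩
    rw [h₁]
    refine (integral_eq_iff_of_ae_le hint (integrable_const 1) (ae_of_all _ fun z ↦ (hℓ z).2)).1 ?_
    simpa [trueRisk] using h₁

lemma lintegral_exp_mul_binKL_le_of_isBinKLCover {R : Finset ℝ} {ε : ℝ} (hR : IsBinKLCover R ε)
    (hint : Integrable (ℓ h) D) (hℓ : ∀ z, ℓ h z ∈ Icc 0 1) (hrisk : trueRisk D ℓ h ∈ Ioo 0 1) :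
    ∫⁻ S : Fin m → Z, ENNReal.ofReal (exp (m * binKL (empRisk ℓ h S) (trueRisk D ℓ h)))
      ∂(Measure.pi fun _ ↦ D) ≤ ENNReal.ofReal (R.card * exp (m * ε)) := by
  have hle (S : Fin m → Z) := hR.exp_mul_binKL_le_sum hrisk fun i ↦ hℓ (S i)
  have hmix : ∀ r ∈ R, Integrable (fun S : Fin m → Z ↦
      exp (m * ε) * ∏ i, bernoulliLR (trueRisk D ℓ h) r (ℓ h (S i))) (Measure.pi fun _ ↦ D) :=
    fun r _ ↦ (Integrable.fintype_prod fun _ ↦ integrable_bernoulliLR _ r hint).const_mul _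
  have hmean : ∫ S : Fin m → Z, ∑ r ∈ R, exp (m * ε) *
      ∏ i, bernoulliLR (trueRisk D ℓ h) r (ℓ h (S i)) ∂(Measure.pi fun _ ↦ D) =
        R.card * exp (m * ε) := by
    have hLR (r : ℝ) := integral_prod_bernoulliLR r hint hrisk m
    rw [integral_finsetSum _ hmix]
    simp_rw [integral_const_mul, trueRisk, hLR, mul_one, Finset.sum_const, nsmul_eq_mul]
  rw [← hmean, ofReal_integral_eq_lintegral_ofReal (integrable_finsetSum _ hmix)
    (ae_of_all _ fun S ↦ (exp_pos _).le.trans (hle S))]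
  exact lintegral_mono fun S ↦ ENNReal.ofReal_le_ofReal (hle S)

lemma lintegral_exp_mul_binKL_eq_one_of_notMem_Ioo (hint : Integrable (ℓ h) D)
    (hℓ : ∀ z, ℓ h z ∈ Icc 0 1) (hrisk : trueRisk D ℓ h ∉ Ioo 0 1) :
    ∫⁻ S : Fin m → Z, ENNReal.ofReal (exp (m * binKL (empRisk ℓ h S) (trueRisk D ℓ h)))
      ∂(Measure.pi fun _ ↦ D) = 1 := by
  have hsample : ∀ᵐ S ∂(Measure.pi fun _ : Fin m ↦ D), ∀ i, ℓ h (S i) = trueRisk D ℓ h :=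
    ae_all_iff.2 fun i ↦ (measurePreserving_eval (fun _ : Fin m ↦ D) i).quasiMeasurePreserving.ae
      (ae_eq_trueRisk_of_notMem_Ioo hint hℓ hrisk)
  have hone : ∀ᵐ S ∂(Measure.pi fun _ : Fin m ↦ D),
      ENNReal.ofReal (exp (m * binKL (empRisk ℓ h S) (trueRisk D ℓ h))) = 1 := by
    filter_upwards [hsample] with S hS
    rcases eq_or_ne m 0 with rfl | hm
    · simp
    · have hemp : empRisk ℓ h S = trueRisk D ℓ h := by simp [empRisk, hS, hm]
      simp [hemp, binKL_self]
  rw [lintegral_congr_ae hone, lintegral_one, measure_univ]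

lemma exp_mul_nine_mul_sq_le_two {N : ℕ} (hm : 0 < m) (hN : 3 * √m ≤ N) :
    exp (m * (9 * (π / (4 * N)) ^ 2)) ≤ 2 := by
  have hm' : (0 : ℝ) < m := Nat.cast_pos.2 hm
  have hN' : (0 : ℝ) < N := (by positivity : 0 < 3 * √(m : ℝ)).trans_le hN
  have hsq : 9 * (m : ℝ) ≤ N ^ 2 := by
    calc 9 * (m : ℝ) = (3 * √m) ^ 2 := by rw [mul_pow, sq_sqrt hm'.le]; norm_num
      _ ≤ N ^ 2 := by gcongr
  rw [← le_log_iff_exp_le two_pos]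
  calc m * (9 * (π / (4 * N)) ^ 2) = (9 * m) / N ^ 2 * (π ^ 2 / 16) := by field_simp; norm_num
    _ ≤ 1 * (π ^ 2 / 16) := by gcongr; exact div_le_one_of_le₀ hsq (sq_nonneg _)
    _ ≤ log 2 := by nlinarith [log_two_gt_d9, pi_lt_d2, pi_pos]

lemma lintegral_exp_mul_binKL_le (hm : 0 < m) (hint : Integrable (ℓ h) D)
    (hℓ : ∀ z, ℓ h z ∈ Icc 0 1) :
    ∫⁻ S : Fin m → Z, ENNReal.ofReal (exp (m * binKL (empRisk ℓ h S) (trueRisk D ℓ h)))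
      ∂(Measure.pi fun _ ↦ D) ≤ ENNReal.ofReal (8 * √m) := by
  have hsqrt : 1 ≤ √(m : ℝ) := one_le_sqrt.2 (mod_cast hm)
  by_cases hrisk : trueRisk D ℓ h ∈ Ioo 0 1
  · obtain ⟨R, hcard, hR⟩ :=
      exists_isBinKLCover (Nat.ceil_pos.2 (by positivity : 0 < 3 * √(m : ℝ)))
    refine (lintegral_exp_mul_binKL_le_of_isBinKLCover hR hint hℓ hrisk).trans
      (ENNReal.ofReal_le_ofReal ?_)
    have hcard' : (R.card : ℝ) ≤ 4 * √m := by
      have hceil := Nat.ceil_lt_add_one (by positivity : 0 ≤ 3 * √(m : ℝ))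
      linarith [(Nat.cast_le (α := ℝ)).2 hcard]
    calc R.card * exp (m * (9 * (π / (4 * ⌈3 * √(m : ℝ)⌉₊)) ^ 2)) ≤ 4 * √m * 2 := by
          gcongr
          exact exp_mul_nine_mul_sq_le_two hm (Nat.le_ceil _)
      _ = 8 * √m := by ring
  · rw [lintegral_exp_mul_binKL_eq_one_of_notMem_Ioo hint hℓ hrisk]
    exact ENNReal.one_le_ofReal.2 (by linarith)

end MomentBound

section Measurability

variable {H Z : Type*} [MeasurableSpace H] [MeasurableSpace Z] {ℓ : H → Z → ℝ}

lemma measurable_trueRisk (D : Measure Z) [SFinite D] (hℓ : Measurable (Function.uncurry ℓ)) :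
    Measurable (trueRisk D ℓ) :=
  hℓ.stronglyMeasurable.integral_prod_right.measurable

lemma measurable_empRisk (m : ℕ) (hℓ : Measurable (Function.uncurry ℓ)) :
    Measurable fun x : H × (Fin m → Z) ↦ empRisk ℓ x.1 x.2 :=
  (Finset.measurable_sum _ fun i _ ↦ hℓ.comp (by fun_prop : Measurable
    fun x : H × (Fin m → Z) ↦ (x.1, x.2 i))).div_const _

lemma measurable_binKL_empRisk_trueRisk (m : ℕ) (D : Measure Z) [SFinite D]
    (hℓ : Measurable (Function.uncurry ℓ)) :
    Measurable fun x : H × (Fin m → Z) ↦ binKL (empRisk ℓ x.1 x.2) (trueRisk D ℓ x.1) :=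
  measurable_binKL.comp
    ((measurable_empRisk m hℓ).prodMk ((measurable_trueRisk D hℓ).comp measurable_fst))

end Measurability

section Tilting

variable {H X : Type*} [MeasurableSpace H] [MeasurableSpace X] {P : Measure H}

lemma tilted_tilted_sub {f : H → ℝ} (hf : Integrable (fun h ↦ exp (f h)) P) (g : H → ℝ) :
    (P.tilted f).tilted (fun h ↦ g h - f h) = P.tilted g := by
  rw [tilted_tilted hf]
  congr with h
  exact add_sub_cancel (f h) (g h)

lemma integrable_exp_sub_tilted {f g : H → ℝ} (hf : Integrable (fun h ↦ exp (f h)) P)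
    (hg : Integrable (fun h ↦ exp (g h)) P) :
    Integrable (fun h ↦ exp (g h - f h)) (P.tilted f) := by
  rw [integrable_tilted_iff hf]
  simpa only [smul_eq_mul, ← exp_add, add_sub_cancel] using hg

lemma lintegral_tilted_exp_sub_mul [NeZero P] {f : H → ℝ} (hf : Integrable (fun h ↦ exp (f h)) P)
    {φ : H → ENNReal} (hφ : ∀ h, φ h ≠ ⊤) :
    ∫⁻ h, ∫⁻ h', ENNReal.ofReal (exp (f h' - f h)) * φ h ∂P ∂(P.tilted f) = ∫⁻ h, φ h ∂P := by
  have hpos : 0 < ∫ h, exp (f h) ∂P := integral_exp_pos hf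
  have hinner (h : H) : ∫⁻ h', ENNReal.ofReal (exp (f h' - f h)) ∂P =
      ENNReal.ofReal ((∫ h', exp (f h') ∂P) / exp (f h)) := by
    simp_rw [exp_sub]
    rw [← integral_div, ofReal_integral_eq_lintegral_ofReal (hf.div_const _)
      (ae_of_all _ fun _ ↦ by positivity)]
  rw [lintegral_tilted]
  refine lintegral_congr fun h ↦ ?_
  rw [lintegral_mul_const' _ _ (hφ h), hinner, ← mul_assoc, ← ENNReal.ofReal_mul (by positivity),
    div_mul_div_cancel₀ hpos.ne', div_self (exp_pos _).ne', ENNReal.ofReal_one, one_mul]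

lemma lintegral_prod_compProd_tilted_exp_sub_mul [IsProbabilityMeasure P] {ρ : Measure X}
    [SFinite ρ] {κ : Kernel X H} [IsSFiniteKernel κ] {u : H → X → ℝ}
    (hu : Measurable (Function.uncurry u)) (hint : ∀ x, Integrable (fun h ↦ exp (u h x)) P)
    (hκ : ∀ x, κ x = P.tilted fun h ↦ u h x) {φ : H → X → ENNReal}
    (hφ : Measurable (Function.uncurry φ)) (hφ_top : ∀ h x, φ h x ≠ ⊤) :
    ∫⁻ p : H × X × H, ENNReal.ofReal (exp (u p.1 p.2.1 - u p.2.2 p.2.1)) * φ p.2.2 p.2.1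
      ∂(P.prod (ρ ⊗ₘ κ)) = ∫⁻ h, ∫⁻ x, φ h x ∂ρ ∂P := by
  have hmeas : Measurable fun p : H × X × H ↦
      ENNReal.ofReal (exp (u p.1 p.2.1 - u p.2.2 p.2.1)) * φ p.2.2 p.2.1 := by
    fun_prop
  rw [lintegral_prod_symm' _ hmeas, Measure.lintegral_compProd hmeas.lintegral_prod_left']
  simp_rw [hκ, lintegral_tilted_exp_sub_mul (hint _) (hφ_top · _)]
  exact lintegral_lintegral_swap (hφ.comp measurable_swap).aemeasurable

end Tilting

lemma one_sub_le_measure_le_log_div {Ω : Type*} [MeasurableSpace Ω] {P : Measure Ω}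
    [IsProbabilityMeasure P] {F : Ω → ℝ} (hF : AEMeasurable F P) {C δ : ℝ} (hC : 0 < C)
    (hδ : 0 < δ) (hexp : ∫⁻ x, ENNReal.ofReal (exp (F x)) ∂P ≤ ENNReal.ofReal C) :
    1 - ENNReal.ofReal δ ≤ P {x | F x ≤ log (C / δ)} := by
  have hCδ : 0 < C / δ := div_pos hC hδ
  have hsub : {x | F x ≤ log (C / δ)}ᶜ ⊆
      {x | ENNReal.ofReal (C / δ) ≤ ENNReal.ofReal (exp (F x))} :=
    fun x (hx : ¬F x ≤ log (C / δ)) ↦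
      ENNReal.ofReal_le_ofReal ((log_le_iff_le_exp hCδ).1 (not_le.1 hx).le)
  have hcompl : P {x | F x ≤ log (C / δ)}ᶜ ≤ ENNReal.ofReal δ :=
    calc P {x | F x ≤ log (C / δ)}ᶜ
        ≤ (∫⁻ x, ENNReal.ofReal (exp (F x)) ∂P) / ENNReal.ofReal (C / δ) :=
          (measure_mono hsub).trans (meas_ge_le_lintegral_div hF.exp.ennreal_ofReal
            (ENNReal.ofReal_pos.2 hCδ).ne' ENNReal.ofReal_ne_top)
      _ ≤ ENNReal.ofReal C / ENNReal.ofReal (C / δ) := by gcongr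
      _ = ENNReal.ofReal δ := by
          rw [← ENNReal.ofReal_div_of_pos hCδ, div_div_cancel₀ hC.ne']
  rw [tsub_le_iff_right]
  calc 1 = P ({x | F x ≤ log (C / δ)} ∪ {x | F x ≤ log (C / δ)}ᶜ) := by
        rw [union_compl_self, measure_univ]
    _ ≤ P {x | F x ≤ log (C / δ)} + P {x | F x ≤ log (C / δ)}ᶜ := measure_union_le _ _
    _ ≤ P {x | F x ≤ log (C / δ)} + ENNReal.ofReal δ := by gcongr

theorem gibbs_complexity_kl_bound_gibbs_prior_general {Z H : Type*} [MeasurableSpace Z]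
    [MeasurableSpace H] {m : ℕ} (hm : 0 < m) (D : Measure Z) [IsProbabilityMeasure D]
    (P : Measure H) [IsProbabilityMeasure P] {ℓ : H → Z → ℝ} (hℓ : Measurable (Function.uncurry ℓ))
    (hℓ01 : ∀ h z, ℓ h z ∈ Icc (0 : ℝ) 1) {u : H → (Fin m → Z) → ℝ}
    (hu : Measurable (Function.uncurry u)) (hint : ∀ S, Integrable (fun h ↦ exp (u h S)) P)
    {κ : Kernel (Fin m → Z) H} (hκ : ∀ S, κ S = P.tilted fun h ↦ u h S) {δ : ℝ} (hδ : 0 < δ) :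
    1 - ENNReal.ofReal δ ≤
      (P.prod (Measure.pi (fun _ : Fin m ↦ D) ⊗ₘ κ))
        {p : H × ((Fin m → Z) × H) |
          binKL (empRisk ℓ p.2.2 p.2.1) (trueRisk D ℓ p.2.2) ≤
            (1 / m) * (u p.2.2 p.2.1 - u p.1 p.2.1 + log (8 * √m / δ))} := by
  have hm' : (0 : ℝ) < m := Nat.cast_pos.2 hm
  have : IsMarkovKernel κ := ⟨fun S ↦ hκ S ▸ isProbabilityMeasure_tilted (hint S)⟩
  have hkl := measurable_binKL_empRisk_trueRisk m D hℓ
  let F (p : H × ((Fin m → Z) × H)) : ℝ :=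
    u p.1 p.2.1 - u p.2.2 p.2.1 + m * binKL (empRisk ℓ p.2.2 p.2.1) (trueRisk D ℓ p.2.2)
  have hF : Measurable F := by
    have hkl' := hkl.comp (by fun_prop : Measurable fun p : H × ((Fin m → Z) × H) ↦ (p.2.2, p.2.1))
    have hu' : Measurable fun p : H × ((Fin m → Z) × H) ↦ u p.1 p.2.1 - u p.2.2 p.2.1 := by fun_prop
    exact hu'.add (hkl'.const_mul _)
  have hℓint (h : H) : Integrable (ℓ h) D :=
    .of_mem_Icc 0 1 (by fun_prop) (ae_of_all _ (hℓ01 h))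
  have hexp : ∫⁻ p, ENNReal.ofReal (exp (F p)) ∂(P.prod (Measure.pi (fun _ : Fin m ↦ D) ⊗ₘ κ)) ≤
      ENNReal.ofReal (8 * √m) := by
    simp_rw [F, exp_add, ENNReal.ofReal_mul (exp_pos _).le]
    rw [lintegral_prod_compProd_tilted_exp_sub_mul hu hint hκ
      (φ := fun h S ↦ ENNReal.ofReal (exp (m * binKL (empRisk ℓ h S) (trueRisk D ℓ h))))
      (hkl.const_mul _).exp.ennreal_ofReal fun _ _ ↦ ENNReal.ofReal_ne_top]
    exact (lintegral_mono fun h ↦ lintegral_exp_mul_binKL_le hm (hℓint h) (hℓ01 h)).trans_eq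
      (by simp)
  refine (one_sub_le_measure_le_log_div hF.aemeasurable (by positivity) hδ hexp).trans
    (measure_mono fun p (hp : F p ≤ log (8 * √m / δ)) ↦ ?_)
  rw [mem_ofPred_eq, one_div, le_inv_mul_iff₀ hm']
  linarith

/-- **Practical bound with informed (Gibbs) prior.**  The prior `P` has density
proportional to `e^{−ω}`.  With probability at least `1−δ` over `S ∼ D^m`,
`h′ ∼ P` and `h ∼ Q_S` (Gibbs posterior for `μ`),
`kl(R_S^ℓ(h) ‖ R_D^ℓ(h)) ≤
  (1/m)·[(μ(h′,S) − ω(h′)) − (μ(h,S) − ω(h)) + ln(8√m/δ²)]`. -/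
theorem gibbs_complexity_kl_bound_gibbs_prior
    {Z H : Type*} [MeasurableSpace Z] [MeasurableSpace H]
    (m : ℕ) (hm : 0 < m)
    (D : Measure Z) [IsProbabilityMeasure D]
    (lam : Measure H) [SigmaFinite lam]
    (ℓ : H → Z → ℝ) (hℓ : Measurable (Function.uncurry ℓ))
    (hℓ01 : ∀ h z, ℓ h z ∈ Set.Icc (0:ℝ) 1)
    -- the informed (Gibbs) prior with density proportional to `e^{−ω}`
    (ω : H → ℝ) (hω : Measurable ω)
    (hωint : Integrable (fun g => Real.exp (-(ω g))) lam)
    (hωpos : 0 < ∫ g, Real.exp (-(ω g)) ∂lam)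
    (Pm : Measure H)
    (hPm : Pm = lam.withDensity fun h =>
      ENNReal.ofReal (Real.exp (-(ω h)) / ∫ g, Real.exp (-(ω g)) ∂lam))
    -- the Gibbs posterior for `μ`
    (μ : H → (Fin m → Z) → ℝ) (hμ : Measurable (Function.uncurry μ))
    (hμint : ∀ S, Integrable (fun g => Real.exp (-(μ g S))) lam)
    (hZpos : ∀ S : Fin m → Z, 0 < ∫ g, Real.exp (-(μ g S)) ∂lam)
    (κ : Kernel (Fin m → Z) H) [IsMarkovKernel κ]
    (hκ : ∀ S, κ S = lam.withDensity fun h =>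
      ENNReal.ofReal (Real.exp (-(μ h S)) / ∫ g, Real.exp (-(μ g S)) ∂lam))
    (δ : ℝ) (hδ : δ ∈ Set.Ioc (0:ℝ) 1) :
    1 - ENNReal.ofReal δ ≤
      (Pm.prod (Measure.pi (fun _ : Fin m => D) ⊗ₘ κ))
        {p : H × ((Fin m → Z) × H) |
          binKL (empRisk ℓ p.2.2 p.2.1) (trueRisk D ℓ p.2.2) ≤
            (1 / m) * ((μ p.1 p.2.1 - ω p.1) - (μ p.2.2 p.2.1 - ω p.2.2)
              + Real.log (8 * Real.sqrt m / δ^2)) } := by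
  have hlam : NeZero lam := ⟨fun h ↦ by simp [h] at hωpos⟩
  obtain rfl : Pm = lam.tilted fun h ↦ -ω h := hPm
  have hprob : IsProbabilityMeasure (lam.tilted fun h ↦ -ω h) := isProbabilityMeasure_tilted hωint
  have hu : Measurable (Function.uncurry fun h S ↦ -μ h S - -ω h) := by fun_prop
  have hint S := integrable_exp_sub_tilted hωint (hμint S)
  have hκ' S := (hκ S).trans (tilted_tilted_sub hωint fun h ↦ -μ h S).symm
  have hδδ : δ ^ 2 ≤ δ := pow_le_of_le_one hδ.1.le hδ.2 two_ne_zero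
  refine (tsub_le_tsub_left (ENNReal.ofReal_le_ofReal hδδ) 1).trans
    ((gibbs_complexity_kl_bound_gibbs_prior_general hm D _ hℓ hℓ01 hu hint hκ'
      (pow_pos hδ.1 2)).trans (measure_mono fun p hp ↦ ?_))
  rw [mem_ofPred_eq] at hp ⊢
  exact hp.trans_eq (by ring)
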